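/- arXiv:1810.06162 — 5 statements merged into one kernel-verified Lean document; each statement's English description precedes it below -/
import Mathlib

section
/- Let H be a reflexive digraph and let ≺ be a linear ordering of the vertices of H. Then ≺ is a min ordering of H if and only if for any three vertices u, v, w with u ≺ v ≺ w: (u,w) ∈ E(H) implies (u,v) ∈ E(H), and (w,u) ∈ E(H) implies (v,u) ∈ E(H). -/
/-- A digraph on vertex type `V` is given by its edge relation `E : V → V → Prop`
(loops allowed).  The min-ordering property for a strict linear order `r`:
for any edges `(u,v)` and `(u',v')` with `r u u'` and `r v' v`, `(u,v')` is also an edge. -/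
def MinOrderProp {V : Type*} (E r : V → V → Prop) : Prop :=
  ∀ u v u' v' : V, E u v → E u' v' → r u u' → r v' v → E u v'

/-- The edge relation of the pair digraph `H⁺` of a digraph with edge relation `E`:
for all vertices `u, u', v, v'`, there are edges `(u,u') → (v,v')` and `(v',v) → (u',u)`
whenever `E u v`, `E u' v'`, `¬ E u v'`, and the endpoints have distinct coordinates. -/
def pairEdge {V : Type*} (E : V → V → Prop) (p q : V × V) : Prop :=
  ∃ u u' v v' : V, u ≠ u' ∧ v ≠ v' ∧ E u v ∧ E u' v' ∧ ¬ E u v' ∧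
    ((p = (u, u') ∧ q = (v, v')) ∨ (p = (v', v) ∧ q = (u', u)))

/-- The edge relation of the implication graph `H*` of a reflexive digraph with edge
relation `E`: for any three distinct vertices `u, v, w`, there are edges
`(u,v) → (w,v)` and `(v,w) → (v,u)` iff `[E u w ∧ ¬ E u v]` or `[E w u ∧ ¬ E v u]`. -/
def implEdge {V : Type*} (E : V → V → Prop) (p q : V × V) : Prop :=
  ∃ u v w : V, u ≠ v ∧ v ≠ w ∧ u ≠ w ∧
    ((E u w ∧ ¬ E u v) ∨ (E w u ∧ ¬ E v u)) ∧
    ((p = (u, v) ∧ q = (w, v)) ∨ (p = (v, w) ∧ q = (v, u)))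

/-- A tournament on `V`: for each pair of distinct vertices exactly one of the two
directed edges is present, and there are no loops. -/
def IsTournamentRel {V : Type*} (T : V → V → Prop) : Prop :=
  (∀ u, ¬ T u u) ∧ ∀ u v : V, u ≠ v → (T u v ↔ ¬ T v u)

/-- A tournament (orientation of the complete graph) `T` is consistent with the digraph `E`
if for every vertex `(u,v)` of the implication graph and every vertex `(u',v')` reachable
from `(u,v)` by a directed walk in the implication graph, `u → v` in `T` implies
`u' → v'` in `T`. -/
def ConsistentWith {V : Type*} (E T : V → V → Prop) : Prop :=
  ∀ u v u' v' : V, u ≠ v → u' ≠ v' →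
    Relation.ReflTransGen (implEdge E) (u, v) (u', v') → T u v → T u' v'

/-- `u, v` form an invertible pair of the digraph `E`: they are distinct and `(u,v)` and
`(v,u)` lie in the same strong component of the pair digraph. -/
def InvertiblePair {V : Type*} (E : V → V → Prop) (u v : V) : Prop :=
  u ≠ v ∧ Relation.ReflTransGen (pairEdge E) (u, v) (v, u) ∧
    Relation.ReflTransGen (pairEdge E) (v, u) (u, v)

/-- The tournament obtained from `T` by reversing the direction of all edges `(x, y)` of `T`
with `u → x`, `x → y`, `y → u` in `T` (the set `E_u`). -/
def revTri {V : Type*} (T : V → V → Prop) (u : V) (x y : V) : Prop :=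
  (T x y ∧ ¬ (T u x ∧ T x y ∧ T y u)) ∨ (T y x ∧ T u y ∧ T x u)

section MinOrdering

variable {V : Type*} {E r : V → V → Prop} {u v w : V}

namespace MinOrderProp

theorem out_edge_of_between (h : MinOrderProp E r) (hv : E v v) (huv : r u v) (hvw : r v w)
    (huw : E u w) : E u v :=
  h u w v v huw hv huv hvw

theorem in_edge_of_between (h : MinOrderProp E r) (hv : E v v) (huv : r u v) (hvw : r v w)
    (hwu : E w u) : E v u :=
  h v v w u hv hwu hvw huv

end MinOrderProp

theorem minOrderProp_of_edges_between [Std.Trichotomous r] (hrefl : ∀ v, E v v)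
    (hout : ∀ u v w, r u v → r v w → E u w → E u v)
    (hin : ∀ u v w, r u v → r v w → E w u → E v u) :
    MinOrderProp E r := by
  intro u v u' v' huv hu'v' hlt_u hlt_v
  rcases trichotomous_of r u v' with hlt | rfl | hgt
  · exact hout u v' v hlt hlt_v huv
  · exact hrefl u
  · exact hin v' u u' hgt hlt_u hu'v'

end MinOrdering

theorem stmt_0_general {V : Type*} (E r : V → V → Prop) [Std.Trichotomous r]
    (hrefl : ∀ v, E v v) :
    MinOrderProp E r ↔
      ∀ u v w : V, r u v → r v w → (E u w → E u v) ∧ (E w u → E v u) where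
  mp h _ v _ huv hvw :=
    ⟨h.out_edge_of_between (hrefl v) huv hvw, h.in_edge_of_between (hrefl v) huv hvw⟩
  mpr h := minOrderProp_of_edges_between hrefl
    (fun u v w huv hvw => (h u v w huv hvw).1) (fun u v w huv hvw => (h u v w huv hvw).2)

/-- For a reflexive digraph `H` and a linear ordering `≺` of its vertices,
`≺` is a min ordering iff for any three vertices `u ≺ v ≺ w`,
`(u,w) ∈ E(H)` implies `(u,v) ∈ E(H)`, and `(w,u) ∈ E(H)` implies `(v,u) ∈ E(H)`. -/
theorem stmt_0 {V : Type*} [Fintype V] (E : V → V → Prop) (hrefl : ∀ v, E v v)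
    (r : V → V → Prop) (hord : IsStrictTotalOrder V r) :
    MinOrderProp E r ↔
      ∀ u v w : V, r u v → r v w → (E u w → E u v) ∧ (E w u → E v u) :=
  stmt_0_general E r hrefl
end

section
/- If a digraph H has an invertible pair, then H has no min ordering. -/
/-!
A min ordering `r` orients every pair of distinct vertices, and this orientation propagates along
the edges of the pair digraph: if `(u, u') → (v, v')` with `r u u'`, then `r v' v` would force the
missing edge `(u, v')`, so `r v v'`; the other kind of edge is the contrapositive.
However `r` orients an invertible pair, one of the two walks between `(u, v)` and `(v, u)` carries
this orientation to the opposite one.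
-/

namespace MinOrderProp

variable {V : Type*} {E r : V → V → Prop} [Std.Trichotomous r] {p q : V × V}

theorem rel_of_pairEdge (hmin : MinOrderProp E r) (hpq : pairEdge E p q) (hp : r p.1 p.2) :
    r q.1 q.2 := by
  obtain ⟨u, u', v, v', hu, hv, huv, hu'v', hnuv', ⟨rfl, rfl⟩ | ⟨rfl, rfl⟩⟩ := hpq
  · have not_rel : ¬ r v' v := fun h => hnuv' (hmin u v u' v' huv hu'v' hp h)
    exact (trichotomous_of r v v').resolve_right (not_or.2 ⟨hv, not_rel⟩)
  · have not_rel : ¬ r u u' := fun h => hnuv' (hmin u v u' v' huv hu'v' h hp)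
    exact (trichotomous_of r u' u).resolve_right (not_or.2 ⟨hu.symm, not_rel⟩)

theorem rel_of_reflTransGen_pairEdge (hmin : MinOrderProp E r)
    (hpq : Relation.ReflTransGen (pairEdge E) p q) (hp : r p.1 p.2) : r q.1 q.2 := by
  induction hpq with
  | refl => exact hp
  | tail _ hedge ih => exact hmin.rel_of_pairEdge hedge ih

end MinOrderProp

theorem stmt_2_general {V : Type*} (E : V → V → Prop) (h : ∃ u v : V, InvertiblePair E u v) :
    ¬ ∃ r : V → V → Prop, Std.Asymm r ∧ Std.Trichotomous r ∧ MinOrderProp E r := by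
  rintro ⟨r, _, _, hmin⟩
  obtain ⟨u, v, hne, walk_uv, walk_vu⟩ := h
  rcases trichotomous_of r u v with huv | heq | hvu
  · exact asymm huv (hmin.rel_of_reflTransGen_pairEdge walk_uv huv)
  · exact hne heq
  · exact asymm hvu (hmin.rel_of_reflTransGen_pairEdge walk_vu hvu)

/-- If a digraph `H` has an invertible pair, then `H` has no min ordering. -/
theorem stmt_2 {V : Type*} [Fintype V] (E : V → V → Prop)
    (h : ∃ u v : V, InvertiblePair E u v) :
    ¬ ∃ r : V → V → Prop, IsStrictTotalOrder V r ∧ MinOrderProp E r := by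
  rintro ⟨r, _, hmin⟩
  exact stmt_2_general E h ⟨r, inferInstance, inferInstance, hmin⟩
end

section
/- Let H be a reflexive digraph, H* its implication graph, and H⁺ its pair digraph. For distinct vertices u,v of H, the pair u,v is an invertible pair (i.e., (u,v) and (v,u) are in the same strong component of H⁺) if and only if (u,v) and (v,u) are in the same strong component of H*. -/
/-!
A step of `H*` is a step of `H⁺` that changes only one coordinate. Conversely, an edge
`(u, u') → (v, v')` of `H⁺` factors through `(u, v')`, which is a vertex because `E u u` and
`¬ E u v'` force `u ≠ v'`; each half is an edge of `H*` unless it is trivial. The two halves are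
exchanged by two symmetries of `H*`: it is unchanged when `H` is replaced by its converse, and
exchanging the coordinates of all pairs reverses its edges. The second symmetry alone handles the
edges `(v', v) → (u', u)` of `H⁺`.
-/

open Relation

section

variable {V : Type*} {E : V → V → Prop} {u u' v v' w : V} {p q : V × V}

theorem implEdge_flip (E : V → V → Prop) : implEdge (flip E) = implEdge E := by
  simp only [funext_iff, implEdge, flip, or_comm, implies_true]

theorem implEdge.swap (h : implEdge E p q) : implEdge E q.swap p.swap := by
  obtain ⟨u, v, w, huv, hvw, huw, hE, hpq⟩ := h
  refine ⟨u, v, w, huv, hvw, huw, hE, ?_⟩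
  rcases hpq with ⟨rfl, rfl⟩ | ⟨rfl, rfl⟩
  · exact .inr ⟨rfl, rfl⟩
  · exact .inl ⟨rfl, rfl⟩

theorem reflTransGen_implEdge_swap (h : ReflTransGen (implEdge E) p q) :
    ReflTransGen (implEdge E) q.swap p.swap :=
  h.swap.lift Prod.swap fun _ _ ↦ implEdge.swap

theorem implEdge.to_pairEdge (hrefl : ∀ x, E x x) (h : implEdge E p q) : pairEdge E p q := by
  obtain ⟨u, v, w, huv, hvw, -, ⟨huw, hnuv⟩ | ⟨hwu, hnvu⟩, hpq⟩ := h
  · exact ⟨u, v, w, v, huv, hvw.symm, huw, hrefl v, hnuv, hpq⟩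
  · exact ⟨v, w, v, u, hvw, huv.symm, hrefl v, hwu, hnvu, hpq.symm⟩

theorem reflTransGen_implEdge_change_fst (hu : E u u) (hvw : v ≠ w) (huw : E u w) (hnuv : ¬ E u v) :
    ReflTransGen (implEdge E) (u, v) (w, v) := by
  have huv : u ≠ v := fun h ↦ hnuv (h ▸ hu)
  obtain rfl | hne := eq_or_ne u w
  · exact .refl
  · exact .single ⟨u, v, w, huv, hvw, hne, .inl ⟨huw, hnuv⟩, .inl ⟨rfl, rfl⟩⟩

theorem reflTransGen_implEdge_change_snd (hw : E w w) (huv : u ≠ v) (hvw : E v w) (hnuw : ¬ E u w) :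
    ReflTransGen (implEdge E) (u, v) (u, w) := by
  have hflip : ReflTransGen (implEdge (flip E)) (w, u) (v, u) :=
    reflTransGen_implEdge_change_fst hw huv hvw hnuw
  rw [implEdge_flip] at hflip
  exact reflTransGen_implEdge_swap hflip

theorem reflTransGen_implEdge_of_edges_of_not_edge (hu : E u u) (hv' : E v' v') (huu' : u ≠ u')
    (hvv' : v ≠ v') (huv : E u v) (hu'v' : E u' v') (hnuv' : ¬ E u v') :
    ReflTransGen (implEdge E) (u, u') (v, v') :=
  calc
    ReflTransGen (implEdge E) (u, u') (u, v') :=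
      reflTransGen_implEdge_change_snd hv' huu' hu'v' hnuv'
    ReflTransGen (implEdge E) _ (v, v') :=
      reflTransGen_implEdge_change_fst hu hvv'.symm huv hnuv'

theorem pairEdge.reflTransGen_implEdge (hrefl : ∀ x, E x x) (h : pairEdge E p q) :
    ReflTransGen (implEdge E) p q := by
  obtain ⟨u, u', v, v', huu', hvv', huv, hu'v', hnuv', hpq⟩ := h
  have hwalk : ReflTransGen (implEdge E) (u, u') (v, v') :=
    reflTransGen_implEdge_of_edges_of_not_edge (hrefl u) (hrefl v') huu' hvv' huv hu'v' hnuv'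
  rcases hpq with ⟨rfl, rfl⟩ | ⟨rfl, rfl⟩
  · exact hwalk
  · exact reflTransGen_implEdge_swap hwalk

theorem stmt_5_general (hrefl : ∀ x, E x x) :
    ReflTransGen (pairEdge E) = ReflTransGen (implEdge E) :=
  le_antisymm (reflTransGen_closed fun _ _ ↦ pairEdge.reflTransGen_implEdge hrefl)
    (ReflTransGen.mono fun _ _ ↦ implEdge.to_pairEdge hrefl)

end

/-- For a reflexive digraph `H` and distinct vertices `u, v`, the pair `u, v`
is invertible (i.e., `(u,v)` and `(v,u)` lie in the same strong component of the pair
digraph `H⁺`) iff `(u,v)` and `(v,u)` lie in the same strong component of the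
implication graph `H*`. -/
theorem stmt_5 {V : Type*} [Fintype V] (E : V → V → Prop) (hrefl : ∀ v, E v v)
    (u v : V) (huv : u ≠ v) :
    (Relation.ReflTransGen (pairEdge E) (u, v) (v, u) ∧
        Relation.ReflTransGen (pairEdge E) (v, u) (u, v)) ↔
      (Relation.ReflTransGen (implEdge E) (u, v) (v, u) ∧
        Relation.ReflTransGen (implEdge E) (v, u) (u, v)) := by
  rw [stmt_5_general hrefl]
end

section
/- Let H be a reflexive digraph. Then H has a min ordering if and only if there exists a tournament on V(H) (an orientation of the complete graph on V(H)) that is consistent with H. -/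
/-!
For a tournament `T` and reflexive `E`, both consistency and the min-ordering property amount to a
condition on the directed paths `a → b → c` of `T`: an edge between `a` and `c`, in either
direction, forces the edge between `a` and `b` in the same direction.  So it remains to turn a
tournament with this property into a linear order with this property.

Reversing the edges of `T` opposite to `u` in its cyclic triangles puts all in-neighbours of `u`
before all out-neighbours of `u`.  This keeps the path condition, destroys every cyclic triangle
through `u` and creates no new one.  Doing so at each vertex of a finite set in turn, and then
using compactness when there are infinitely many vertices, yields a tournament without cyclic
triangles, that is, a linear order.
-/

section

variable {V : Type*} {E T : V → V → Prop} {u x y z : V}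

theorem isTournamentRel_iff_asymm_and_total : IsTournamentRel T ↔
    (∀ x y, T x y → ¬ T y x) ∧ ∀ x y, x ≠ y → T x y ∨ T y x := by
  constructor
  · rintro ⟨irrefl, orient⟩
    refine ⟨fun x y hxy => ?_, fun x y hne => ?_⟩
    · have hne : x ≠ y := by rintro rfl; exact irrefl x hxy
      exact (orient x y hne).1 hxy
    · exact or_iff_not_imp_right.2 (orient x y hne).2
  · rintro ⟨asymm, total⟩
    exact ⟨fun x hx => asymm x x hx hx,
      fun x y hne => ⟨asymm x y, (total x y hne).resolve_right⟩⟩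

namespace IsTournamentRel

theorem asymm (hT : IsTournamentRel T) (hxy : T x y) : ¬ T y x :=
  (isTournamentRel_iff_asymm_and_total.1 hT).1 x y hxy

theorem total (hT : IsTournamentRel T) (hne : x ≠ y) : T x y ∨ T y x :=
  (isTournamentRel_iff_asymm_and_total.1 hT).2 x y hne

theorem ne (hT : IsTournamentRel T) (hxy : T x y) : x ≠ y := by
  rintro rfl
  exact hT.1 x hxy

theorem of_isStrictTotalOrder [IsStrictTotalOrder V T] : IsTournamentRel T :=
  isTournamentRel_iff_asymm_and_total.2 ⟨fun _ _ => asymm_of T,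
    fun x y hne => (trichotomous_of T x y).imp_right (Or.resolve_left · hne)⟩

end IsTournamentRel

/-- Local consistency of `T` with the digraph `E`: the single-step form of `ConsistentWith`, stated
on the directed paths `a → b → c` of `T` instead of on the implication graph. -/
def LocallyConsistent (E T : V → V → Prop) : Prop :=
  ∀ ⦃a b c⦄, T a b → T b c → (E a c → E a b) ∧ (E c a → E b a)

/-- `x → y → z → x` is a cyclic triangle of the relation `T`. -/
def CyclicTriangle (T : V → V → Prop) (x y z : V) : Prop :=
  T x y ∧ T y z ∧ T z x

theorem CyclicTriangle.rotate (h : CyclicTriangle T x y z) : CyclicTriangle T y z x :=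
  ⟨h.2.1, h.2.2, h.1⟩

theorem IsTournamentRel.isStrictTotalOrder_of_not_cyclicTriangle (hT : IsTournamentRel T)
    (hcyc : ∀ x y z, ¬ CyclicTriangle T x y z) : IsStrictTotalOrder V T where
  irrefl := hT.1
  trans x y z hxy hyz := by
    have hne : x ≠ z := by rintro rfl; exact hT.asymm hxy hyz
    exact (hT.total hne).resolve_right fun hzx => hcyc x y z ⟨hxy, hyz, hzx⟩
  trichotomous x y hxy hyx := by
    by_contra hne
    exact (hT.total hne).elim hxy hyx

section LocalCharacterization

theorem ConsistentWith.locallyConsistent (hT : IsTournamentRel T) (h : ConsistentWith E T) :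
    LocallyConsistent E T := by
  intro a b c hab hbc
  have hac : a ≠ c := by rintro rfl; exact hT.asymm hab hbc
  have not_forced : ¬ ((E a c ∧ ¬ E a b) ∨ (E c a ∧ ¬ E b a)) := fun hforce =>
    hT.asymm hbc <| h a b c b (hT.ne hab) (hT.ne hbc).symm
      (.single ⟨a, b, c, hT.ne hab, hT.ne hbc, hac, hforce, .inl ⟨rfl, rfl⟩⟩) hab
  tauto

theorem LocallyConsistent.rel_of_implEdge (hT : IsTournamentRel T) (h : LocallyConsistent E T)
    {p q : V × V} (hpq : implEdge E p q) (hp : T p.1 p.2) : T q.1 q.2 := by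
  obtain ⟨a, b, c, hab, hbc, -, hforce, hends⟩ := hpq
  have not_path : ¬ (T a b ∧ T b c) := by
    rintro ⟨hTab, hTbc⟩
    have := h hTab hTbc
    tauto
  rcases hends with ⟨rfl, rfl⟩ | ⟨rfl, rfl⟩
  · exact (hT.total hbc).resolve_left fun hTbc => not_path ⟨hp, hTbc⟩
  · exact (hT.total hab).resolve_left fun hTab => not_path ⟨hTab, hp⟩

theorem LocallyConsistent.consistentWith (hT : IsTournamentRel T) (h : LocallyConsistent E T) :
    ConsistentWith E T := by
  intro u v u' v' _ _ hwalk huv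
  exact Relation.ReflTransGen.head_induction_on
    (motive := fun p _ => T p.1 p.2 → T u' v') hwalk id
    (fun hstep _ ih hp => ih (h.rel_of_implEdge hT hstep hp)) huv

theorem MinOrderProp.locallyConsistent (hrefl : ∀ v, E v v) (h : MinOrderProp E T) :
    LocallyConsistent E T := fun a b c hab hbc =>
  ⟨fun hac => h a c b b hac (hrefl b) hab hbc, fun hca => h b b c a (hrefl b) hca hbc hab⟩

theorem LocallyConsistent.minOrderProp (hrefl : ∀ v, E v v) (hT : IsTournamentRel T)
    (h : LocallyConsistent E T) : MinOrderProp E T := by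
  intro u v u' v' huv hu'v' huu' hv'v
  rcases eq_or_ne u v' with rfl | hne
  · exact hrefl u
  rcases hT.total hne with huv' | hv'u
  · exact (h huv' hv'v).1 huv
  · exact (h hv'u huu').2 hu'v'

end LocalCharacterization

section RevTri

theorem rel_or_of_revTri (h : revTri T u x y) : T x y ∨ (T y x ∧ T u y ∧ T x u) :=
  h.imp_left And.left

theorem isTournamentRel_revTri (hT : IsTournamentRel T) (u : V) :
    IsTournamentRel (revTri T u) := by
  refine isTournamentRel_iff_asymm_and_total.2 ⟨fun x y => ?_, fun x y hne => ?_⟩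
  · have : T x y → ¬ T y x := hT.asymm
    unfold revTri
    tauto
  · have := hT.total hne
    unfold revTri
    tauto

theorem IsTournamentRel.rel_right_of_revTri (hT : IsTournamentRel T) (hxy : revTri T u x y)
    (hux : T u x) : T u y := by
  rcases hxy with ⟨hTxy, not_opposite⟩ | ⟨-, huy, -⟩
  · have hne : u ≠ y := by rintro rfl; exact hT.asymm hux hTxy
    exact (hT.total hne).resolve_right fun hyu => not_opposite ⟨hux, hTxy, hyu⟩
  · exact huy

theorem IsTournamentRel.rel_left_of_revTri (hT : IsTournamentRel T) (hxy : revTri T u x y)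
    (hyu : T y u) : T x u := by
  rcases hxy with ⟨hTxy, not_opposite⟩ | ⟨-, -, hxu⟩
  · have hne : x ≠ u := by rintro rfl; exact hT.asymm hyu hTxy
    exact (hT.total hne).resolve_right fun hux => not_opposite ⟨hux, hTxy, hyu⟩
  · exact hxu

theorem IsTournamentRel.not_cyclicTriangle_revTri (hT : IsTournamentRel T) :
    ¬ CyclicTriangle (revTri T u) u x y := by
  rintro ⟨hux, hxy, hyu⟩
  have hTux : T u x := (rel_or_of_revTri hux).resolve_right fun h => hT.1 u h.2.2
  have hTyu : T y u := (rel_or_of_revTri hyu).resolve_right fun h => hT.1 u h.2.1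
  exact hT.asymm (hT.rel_right_of_revTri hxy hTux) hTyu

theorem IsTournamentRel.rel_of_cyclicTriangle_revTri (hT : IsTournamentRel T)
    (h : CyclicTriangle (revTri T u) x y z) : T x y := by
  obtain ⟨hxy, hyz, hzx⟩ := h
  refine (rel_or_of_revTri hxy).resolve_right ?_
  rintro ⟨-, huy, hxu⟩
  have huz : T u z := hT.rel_right_of_revTri hyz huy
  exact hT.asymm (hT.rel_right_of_revTri hzx huz) hxu

theorem IsTournamentRel.cyclicTriangle_of_revTri (hT : IsTournamentRel T)
    (h : CyclicTriangle (revTri T u) x y z) : CyclicTriangle T x y z :=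
  ⟨hT.rel_of_cyclicTriangle_revTri h, hT.rel_of_cyclicTriangle_revTri h.rotate,
    hT.rel_of_cyclicTriangle_revTri h.rotate.rotate⟩

theorem LocallyConsistent.edge_iff_of_cyclicTriangle (h : LocallyConsistent E T)
    (hcyc : CyclicTriangle T x y z) : (E x z ↔ E x y) ∧ (E z x ↔ E y x) := by
  obtain ⟨hxy, hyz, hzx⟩ := hcyc
  -- The three paths give the cycle `E x z → E x y → E z y → E z x → E y x → E y z → E x z`.
  have := h hxy hyz
  have := h hyz hzx
  have := h hzx hxy
  tauto

theorem locallyConsistent_revTri (hT : IsTournamentRel T) (h : LocallyConsistent E T) (u : V) :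
    LocallyConsistent E (revTri T u) := by
  intro a b c hab hbc
  -- If either edge of the path was reversed, then `a → u → c` in `T`.
  rcases rel_or_of_revTri hab with hTab | ⟨hTba, hub, hau⟩
  · rcases rel_or_of_revTri hbc with hTbc | ⟨-, huc, hbu⟩
    · exact h hTab hTbc
    · have via_u := h (hT.rel_left_of_revTri hab hbu) huc
      have to_b := h hTab hbu
      exact ⟨to_b.1 ∘ via_u.1, to_b.2 ∘ via_u.2⟩
  · have via_u := h hau (hT.rel_right_of_revTri hbc hub)
    have to_b := h.edge_iff_of_cyclicTriangle ⟨hau, hub, hTba⟩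
    exact ⟨to_b.1.2 ∘ via_u.1, to_b.2.2 ∘ via_u.2⟩

end RevTri

theorem LocallyConsistent.exists_not_cyclicTriangle_of_finset (hT : IsTournamentRel T)
    (h : LocallyConsistent E T) (s : Finset V) :
    ∃ R : V → V → Prop, IsTournamentRel R ∧ LocallyConsistent E R ∧
      ∀ u ∈ s, ∀ x y, ¬ CyclicTriangle R u x y := by
  classical
  induction s using Finset.induction_on with
  | empty => exact ⟨T, hT, h, by simp⟩
  | insert w s _ ih =>
    obtain ⟨R, hR, hcons, hcyc⟩ := ih
    refine ⟨revTri R w, isTournamentRel_revTri hR w, locallyConsistent_revTri hR hcons w,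
      fun u hu x y htri => ?_⟩
    rcases Finset.mem_insert.1 hu with rfl | hus
    · exact hR.not_cyclicTriangle_revTri htri
    · exact hcyc u hus x y (hR.cyclicTriangle_of_revTri htri)

theorem exists_rel_forall_finset_agree (R : Finset V → V → V → Prop) :
    ∃ r : V → V → Prop, ∀ s : Finset V, ∃ t, s ⊆ t ∧
      ∀ x ∈ s, ∀ y ∈ s, (r x y ↔ R t x y) := by
  classical
  obtain ⟨χ, hχ⟩ := Finset.rado_selection
    (fun (s : Finset (V × V)) p => R (s.image Prod.fst) p.1 p.2)
  refine ⟨fun x y => χ (x, y), fun s => ?_⟩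
  obtain ⟨t, hst, hagree⟩ := hχ (s ×ˢ s)
  refine ⟨t.image Prod.fst, fun x hx => ?_, fun x hx y hy => ?_⟩
  · exact Finset.mem_image_of_mem Prod.fst (hst (Finset.mk_mem_product hx hx))
  · exact (hagree (x, y) (Finset.mk_mem_product hx hy)).to_iff

theorem LocallyConsistent.exists_isStrictTotalOrder (hT : IsTournamentRel T)
    (h : LocallyConsistent E T) :
    ∃ r : V → V → Prop, IsStrictTotalOrder V r ∧ LocallyConsistent E r := by
  classical
  choose R hR hcons hcyc using h.exists_not_cyclicTriangle_of_finset hT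
  obtain ⟨r, hr⟩ := exists_rel_forall_finset_agree R
  have agree (x y z : V) :
      ∃ t, x ∈ t ∧ (r x y ↔ R t x y) ∧ (r y z ↔ R t y z) ∧ (r z x ↔ R t z x) := by
    obtain ⟨t, hst, ht⟩ := hr {x, y, z}
    exact ⟨t, hst (by simp), ht x (by simp) y (by simp), ht y (by simp) z (by simp),
      ht z (by simp) x (by simp)⟩
  have r_tournament : IsTournamentRel r := by
    refine isTournamentRel_iff_asymm_and_total.2 ⟨fun x y => ?_, fun x y hne => ?_⟩
    · obtain ⟨t, -, hxy, hyx, -⟩ := agree x y x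
      rw [hxy, hyx]
      exact (hR t).asymm
    · obtain ⟨t, -, hxy, hyx, -⟩ := agree x y x
      rw [hxy, hyx]
      exact (hR t).total hne
  have r_acyclic (x y z : V) : ¬ CyclicTriangle r x y z := by
    obtain ⟨t, hxt, hxy, hyz, hzx⟩ := agree x y z
    rw [CyclicTriangle, hxy, hyz, hzx]
    exact hcyc t x hxt y z
  have r_consistent : LocallyConsistent E r := by
    intro x y z
    obtain ⟨t, -, hxy, hyz, -⟩ := agree x y z
    rw [hxy, hyz]
    exact @hcons t x y z
  exact ⟨r, r_tournament.isStrictTotalOrder_of_not_cyclicTriangle r_acyclic, r_consistent⟩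

end

theorem stmt_7_general {V : Type*} (E : V → V → Prop) (hrefl : ∀ v, E v v) :
    (∃ r : V → V → Prop, IsStrictTotalOrder V r ∧ MinOrderProp E r) ↔
      (∃ T : V → V → Prop, IsTournamentRel T ∧ ConsistentWith E T) := by
  constructor
  · rintro ⟨r, _, hmin⟩
    have hr : IsTournamentRel r := .of_isStrictTotalOrder
    exact ⟨r, hr, (hmin.locallyConsistent hrefl).consistentWith hr⟩
  · rintro ⟨T, hT, hcons⟩
    obtain ⟨r, hr, hloc⟩ := (hcons.locallyConsistent hT).exists_isStrictTotalOrder hT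
    exact ⟨r, hr, hloc.minOrderProp hrefl .of_isStrictTotalOrder⟩

/-- A reflexive digraph `H` has a min ordering iff there exists a tournament
on `V(H)` consistent with `H`. -/
theorem stmt_7 {V : Type*} [Fintype V] (E : V → V → Prop) (hrefl : ∀ v, E v v) :
    (∃ r : V → V → Prop, IsStrictTotalOrder V r ∧ MinOrderProp E r) ↔
      (∃ T : V → V → Prop, IsTournamentRel T ∧ ConsistentWith E T) :=
  stmt_7_general E hrefl
end

section
/- Let H be a reflexive digraph. There exists a tournament on V(H) consistent with H if and only if H has no invertible pairs, i.e., for no pair of distinct vertices u,v are (u,v) and (v,u) in the same strong component of the implication graph H*. -/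
/-!
Read a pair `(u, v)` as the literal asserting `u → v` in `T`, and its swap as the negated literal.
A consistent tournament is then a truth assignment closed under the edges of `H*`, that is, a
solution of a 2-SAT instance: `H*` is skew-symmetric, since each edge comes with its contrapositive.
In any such instance a maximal partial assignment `S` decides every literal `p` that is not
equivalent to its negation: if `p` does not lead to `¬p` and `¬p ∉ S`, then everything reachable
from `p` can be added to `S`, because by skew-symmetry a contradiction would give `¬p ∈ S` or a walk
from `p` to `¬p`.
-/

open Relation Function

section PartialAssignment

variable {α : Type*} {r : α → α → Prop} {neg : α → α} {S : Set α} {p q : α}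

/-- A partial truth assignment for a system of implications `r` between literals in `α` with
negation `neg`, encoded as the set `S` of literals made true: it is closed under the implications
and contains no literal together with its negation. -/
structure IsPartialAssignment (r : α → α → Prop) (neg : α → α) (S : Set α) : Prop where
  mem_of_rel : ∀ ⦃p q⦄, r p q → p ∈ S → q ∈ S
  neg_notMem : ∀ ⦃p⦄, p ∈ S → neg p ∉ S

theorem IsPartialAssignment.mem_of_reflTransGen (hS : IsPartialAssignment r neg S)
    (hpq : ReflTransGen r p q) (hp : p ∈ S) : q ∈ S := by
  induction hpq with
  | refl => exact hp
  | tail _ hbc hb => exact hS.mem_of_rel hbc hb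

theorem IsPartialAssignment.sUnion {C : Set (Set α)} (hchain : IsChain (· ⊆ ·) C)
    (hC : ∀ S ∈ C, IsPartialAssignment r neg S) : IsPartialAssignment r neg (⋃₀ C) where
  mem_of_rel := fun _ _ hpq ⟨S, hSC, hp⟩ ↦ ⟨S, hSC, (hC S hSC).mem_of_rel hpq hp⟩
  neg_notMem := by
    rintro p ⟨S, hSC, hp⟩ ⟨S', hSC', hnp⟩
    rcases hchain.total hSC hSC' with hle | hle
    · exact (hC S' hSC').neg_notMem (hle hp) hnp
    · exact (hC S hSC).neg_notMem hp (hle hnp)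

theorem exists_maximal_isPartialAssignment (r : α → α → Prop) (neg : α → α) :
    ∃ S, Maximal (IsPartialAssignment r neg) S :=
  zorn_subset {S | IsPartialAssignment r neg S} fun C hC hchain ↦
    ⟨⋃₀ C, .sUnion hchain hC, fun _ ↦ Set.subset_sUnion_of_mem⟩

theorem reflTransGen_neg_neg (hr : ∀ ⦃p q⦄, r p q → r (neg q) (neg p)) (hpq : ReflTransGen r p q) :
    ReflTransGen r (neg q) (neg p) :=
  hpq.swap.lift neg fun _ _ hba ↦ hr hba

theorem IsPartialAssignment.union_reachable (hneg : Involutive neg)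
    (hr : ∀ ⦃p q⦄, r p q → r (neg q) (neg p)) (hS : IsPartialAssignment r neg S)
    (hp : ¬ ReflTransGen r p (neg p)) (hpS : neg p ∉ S) :
    IsPartialAssignment r neg (S ∪ {q | ReflTransGen r p q}) where
  mem_of_rel := by
    rintro x y hxy (hx | hx)
    · exact .inl (hS.mem_of_rel hxy hx)
    · exact .inr (ReflTransGen.tail hx hxy)
  neg_notMem := by
    have reach_neg {x : α} (hx : ReflTransGen r p (neg x)) : ReflTransGen r x (neg p) :=
      hneg x ▸ reflTransGen_neg_neg hr hx
    rintro x (hx | hx) (hnx | hnx)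
    · exact hS.neg_notMem hx hnx
    · exact hpS (hS.mem_of_reflTransGen (reach_neg hnx) hx)
    · exact hpS (hS.mem_of_reflTransGen (reflTransGen_neg_neg hr hx) hnx)
    · exact hp (ReflTransGen.trans hx (reach_neg hnx))

theorem mem_or_neg_mem_of_maximal (hneg : Involutive neg)
    (hr : ∀ ⦃p q⦄, r p q → r (neg q) (neg p)) (hS : Maximal (IsPartialAssignment r neg) S)
    (hp : ¬ (ReflTransGen r p (neg p) ∧ ReflTransGen r (neg p) p)) : p ∈ S ∨ neg p ∈ S := by
  have mem_of_not_reach {x : α} (hx : ¬ ReflTransGen r x (neg x)) (hxS : neg x ∉ S) : x ∈ S :=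
    hS.le_of_ge (hS.prop.union_reachable hneg hr hx hxS) Set.subset_union_left (.inr .refl)
  by_contra! ⟨hpS, hnpS⟩
  have p_reach : ReflTransGen r p (neg p) := not_imp_comm.1 (mem_of_not_reach · hnpS) hpS
  have neg_p_reach : ReflTransGen r (neg p) (neg (neg p)) :=
    not_imp_comm.1 (mem_of_not_reach · (by rwa [hneg p])) hnpS
  rw [hneg p] at neg_p_reach
  exact hp ⟨p_reach, neg_p_reach⟩

end PartialAssignment

section Tournament

variable {V : Type*} {E T : V → V → Prop}

theorem implEdge_swap {p q : V × V} (hpq : implEdge E p q) : implEdge E q.swap p.swap := by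
  obtain ⟨u, v, w, huv, hvw, huw, hE, hends⟩ := hpq
  refine ⟨u, v, w, huv, hvw, huw, hE, ?_⟩
  rcases hends with ⟨rfl, rfl⟩ | ⟨rfl, rfl⟩
  · exact .inr ⟨rfl, rfl⟩
  · exact .inl ⟨rfl, rfl⟩

theorem ConsistentWith.not_reflTransGen_and_reflTransGen_swap
    (hc : ConsistentWith E T) (hT : IsTournamentRel T) {u v : V} (huv : u ≠ v) :
    ¬ (ReflTransGen (implEdge E) (u, v) (v, u) ∧ ReflTransGen (implEdge E) (v, u) (u, v)) := by
  rintro ⟨huv_vu, hvu_uv⟩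
  have T_iff : T u v ↔ T v u :=
    ⟨hc u v v u huv huv.symm huv_vu, hc v u u v huv.symm huv hvu_uv⟩
  exact iff_not_self (T_iff.symm.trans (hT.2 u v huv))

theorem IsPartialAssignment.isTournamentRel {r : V × V → V × V → Prop} {S : Set (V × V)}
    (hS : IsPartialAssignment r Prod.swap S)
    (htotal : ∀ u v, u ≠ v → (u, v) ∈ S ∨ (v, u) ∈ S) :
    IsTournamentRel fun u v ↦ (u, v) ∈ S :=
  ⟨fun _ huu ↦ hS.neg_notMem huu huu,
    fun u v huv ↦ ⟨fun h ↦ hS.neg_notMem h, (htotal u v huv).resolve_right⟩⟩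

theorem IsPartialAssignment.consistentWith {neg : V × V → V × V} {S : Set (V × V)}
    (hS : IsPartialAssignment (implEdge E) neg S) : ConsistentWith E fun u v ↦ (u, v) ∈ S :=
  fun _ _ _ _ _ _ hreach huv ↦ hS.mem_of_reflTransGen hreach huv

end Tournament

theorem stmt_14_general {V : Type*} (E : V → V → Prop) :
    (∃ T : V → V → Prop, IsTournamentRel T ∧ ConsistentWith E T) ↔
      ¬ ∃ u v : V, u ≠ v ∧
        ReflTransGen (implEdge E) (u, v) (v, u) ∧ ReflTransGen (implEdge E) (v, u) (u, v) := by
  constructor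
  · rintro ⟨T, hT, hc⟩ ⟨u, v, huv, hinv⟩
    exact hc.not_reflTransGen_and_reflTransGen_swap hT huv hinv
  · intro hno
    obtain ⟨S, hS⟩ := exists_maximal_isPartialAssignment (implEdge E) Prod.swap
    have htotal (u v : V) (huv : u ≠ v) : (u, v) ∈ S ∨ (v, u) ∈ S :=
      mem_or_neg_mem_of_maximal Prod.swap_swap (fun _ _ ↦ implEdge_swap) hS
        fun hinv ↦ hno ⟨u, v, huv, hinv⟩
    exact ⟨fun u v ↦ (u, v) ∈ S, hS.prop.isTournamentRel htotal, hS.prop.consistentWith⟩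

/-- For a reflexive digraph `H`, there exists a tournament on `V(H)`
consistent with `H` iff `H` has no invertible pairs, i.e., for no distinct `u, v` are
`(u,v)` and `(v,u)` in the same strong component of the implication graph `H*`. -/
theorem stmt_14 {V : Type*} [Fintype V] (E : V → V → Prop) (hrefl : ∀ v, E v v) :
    (∃ T : V → V → Prop, IsTournamentRel T ∧ ConsistentWith E T) ↔
      ¬ ∃ u v : V, u ≠ v ∧
        Relation.ReflTransGen (implEdge E) (u, v) (v, u) ∧
        Relation.ReflTransGen (implEdge E) (v, u) (u, v) :=
  stmt_14_general E
end
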